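/- There exist an absolute constant γ > 0 and absolute constants c₁, c₂, c₃ > 0 such that the following holds. In the model Y = Xβ* + ξ with p ≥ n and k* ≤ c·n for an absolute constant c, if conditionally on ξ the rows X_i^T of X are i.i.d. N(0,Σ), then with probability at least 1 − c₁e^{−c₂n} the minimum ℓ2-norm interpolator β̂ satisfies ‖Σ^{1/2}(β̂ − β*)‖₂ ≥ min( r̄(γ), c₃‖ξ‖₂/√n ). -/

import Mathlib

open MeasureTheory ProbabilityTheory Matrix Finset
open scoped ENNReal Classical

noncomputable section

/-- Euclidean (`ℓ2`) norm of a finite real vector. -/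
def enorm2 {m : ℕ} (v : Fin m → ℝ) : ℝ := Real.sqrt (∑ i, v i ^ 2)

/-- The prediction (semi-)norm `‖Σ^{1/2} d‖₂ = √(dᵀ Σ d)`. -/
def predNorm {p : ℕ} (Sig : Matrix (Fin p) (Fin p) ℝ) (d : Fin p → ℝ) : ℝ :=
  Real.sqrt (d ⬝ᵥ Sig.mulVec d)

/-- The standard Gaussian measure `N(0, I_p)` on `ℝ^p`. -/
def stdGaussian (p : ℕ) : Measure (Fin p → ℝ) :=
  Measure.pi fun _ : Fin p => gaussianReal 0 1

/-- `Σ^{1/2} = P Λ^{1/2} Pᵀ` built from the eigendecomposition data. -/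
def covHalf (p : ℕ) (lam : ℕ → ℝ) (Porth : Matrix (Fin p) (Fin p) ℝ) :
    Matrix (Fin p) (Fin p) ℝ :=
  Porth * Matrix.diagonal (fun i : Fin p => Real.sqrt (lam ((i : ℕ) + 1))) * Porthᵀ

/-- The Gaussian law `N(0,Σ)` on `ℝ^p`, realized as the pushforward of `N(0,I_p)`
by `g ↦ Σ^{1/2} g`. -/
def mvGaussian (p : ℕ) (lam : ℕ → ℝ) (Porth : Matrix (Fin p) (Fin p) ℝ) :
    Measure (Fin p → ℝ) :=
  Measure.map (fun g => (covHalf p lam Porth).mulVec g) (stdGaussian p)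

/-- `r_k(Σ) = ∑_{i=k}^p λ_i(Σ)` (eigenvalues `1`-indexed). -/
def rsum (p : ℕ) (lam : ℕ → ℝ) (k : ℕ) : ℝ := ∑ i ∈ Finset.Icc k p, lam i

/-- The set `{k ∈ {1,…,p} : r_k(Σ)/λ_k(Σ) ≥ c₀ n}`. -/
def kstarSet (p : ℕ) (lam : ℕ → ℝ) (c0 : ℝ) (n : ℕ) : Set ℕ :=
  {k | 1 ≤ k ∧ k ≤ p ∧ c0 * n ≤ rsum p lam k / lam k}

/-- `k* = inf { k ∈ {1,…,p} : r_k(Σ)/λ_k(Σ) ≥ c₀ n }`. -/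
def kstar (p : ℕ) (lam : ℕ → ℝ) (c0 : ℝ) (n : ℕ) : ℕ := sInf (kstarSet p lam c0 n)

/-- `ρ = ‖β*‖₂ + 4‖ξ‖₂/√(r_{k*}(Σ))`. -/
def rho (p : ℕ) (lam : ℕ → ℝ) (c0 : ℝ) (n : ℕ) (βstar : Fin p → ℝ) (ξnorm : ℝ) : ℝ :=
  enorm2 βstar + 4 * ξnorm / Real.sqrt (rsum p lam (kstar p lam c0 n))

/-- `r*(η) = inf { r > 0 : ∑ᵢ min(λ_i(Σ), r²) ≤ η n r² }`. -/
def rstar (p n : ℕ) (lam : ℕ → ℝ) (η : ℝ) : ℝ :=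
  sInf {r : ℝ | 0 < r ∧ ∑ i : Fin p, min (lam ((i : ℕ) + 1)) (r ^ 2) ≤ η * n * r ^ 2}

/-- `r̄(γ) = sup { r > 0 : ∑ᵢ min(λ_i(Σ)ρ², r²) ≤ γ ‖ξ‖₂² }`. -/
def rbar (p : ℕ) (lam : ℕ → ℝ) (γ ρ ξnorm : ℝ) : ℝ :=
  sSup {r : ℝ | 0 < r ∧ ∑ i : Fin p, min (lam ((i : ℕ) + 1) * ρ ^ 2) (r ^ 2) ≤ γ * ξnorm ^ 2}

/-- `k̄ = inf { k ≥ k* : r_k(Σ) ≤ (γ/2) r_{k*}(Σ) }`, with `k̄ = p+1` if the set is empty. -/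
def kbar (p : ℕ) (lam : ℕ → ℝ) (c0 : ℝ) (n : ℕ) (γ : ℝ) : ℕ :=
  if _h : {k | kstar p lam c0 n ≤ k ∧
      rsum p lam k ≤ γ / 2 * rsum p lam (kstar p lam c0 n)}.Nonempty
  then sInf {k | kstar p lam c0 n ≤ k ∧
      rsum p lam k ≤ γ / 2 * rsum p lam (kstar p lam c0 n)}
  else p + 1

/-- `b` is a minimum `ℓ2`-norm interpolator for the design `M` and responses `Y`. -/
def IsMinInterp {n p : ℕ} (M : Fin n → Fin p → ℝ) (Y : Fin n → ℝ) (b : Fin p → ℝ) : Prop :=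
  (∀ i, ∑ j, M i j * b j = Y i) ∧
    ∀ b' : Fin p → ℝ, (∀ i, ∑ j, M i j * b' j = Y i) → enorm2 b ≤ enorm2 b'

/-!
The error `d = β̂ - β*` of an interpolator solves `X d = ξ`, and minimality of `‖β̂‖` together
with a lower bound on the smallest singular value of `X` gives `‖d‖ ≤ 4 ρ`. If moreover the
prediction norm of `d` were smaller than `t = min (r̄, ‖ξ‖ / (80 √n))`, then `d` would lie in the
ellipsoid `‖d‖² / ρ² + ‖Σ^{1/2} d‖² / t² ≤ 17`, of weights `a_j = (ρ⁻² + λ_j t⁻²)⁻¹`. By duality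
the image of this ellipsoid under `X` lies in a ball whose radius is governed by the quadratic
form `v ↦ ∑ⱼ a_j ⟨v, X u_j⟩²`, `u_j` being the eigenvectors of `Σ`. A net argument and chi-square
tails bound that form by a multiple of `∑ⱼ a_j λ_j + n t² ≲ ‖ξ‖²`, with constants small enough to
exclude `X d = ξ`. The weights need only be adapted to `‖ξ‖` up to a factor of two: for each
dyadic scale the exceptional designs have probability at most `3 e^{-n}`, and since `X` is
independent of `ξ` the scale may be chosen by `ξ`.
-/

section SphereNet

variable {E F : Type*} [NormedAddCommGroup E] [NormedSpace ℝ E]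
  [NormedAddCommGroup F] [NormedSpace ℝ F] {ε : NNReal}

theorem card_le_of_isSeparated_of_subset_closedBall [FiniteDimensional ℝ E] {s : Finset E}
    (hε : 0 < ε) (hs : (s : Set E) ⊆ Metric.closedBall 0 1)
    (hsep : Metric.IsSeparated (ε : ℝ≥0∞) (s : Set E)) :
    (s.card : ℝ) ≤ (1 + 2 / ε : ℝ) ^ Module.finrank ℝ E := by
  borelize E
  let μ : Measure E := Measure.addHaar
  have hradius : (0 : ℝ) < ε / 2 := by positivity
  have hdisj : (s : Set E).PairwiseDisjoint fun c => Metric.ball c (ε / 2 : ℝ) := by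
    intro c hc d hd hcd
    apply Metric.ball_disjoint_ball
    have hdist : (ε : ℝ≥0∞) < edist c d := hsep hc hd hcd
    rw [edist_nndist, ENNReal.coe_lt_coe] at hdist
    rw [add_halves]
    exact_mod_cast hdist.le
  have hsub : (⋃ c ∈ s, Metric.ball c (ε / 2 : ℝ)) ⊆ Metric.ball (0 : E) (1 + ε / 2) := by
    refine Set.iUnion₂_subset fun c hc => Metric.ball_subset_ball' ?_
    linarith [Metric.mem_closedBall.1 (hs hc)]
  have hvolume : (s.card : ℝ≥0∞) * ENNReal.ofReal ((ε / 2) ^ Module.finrank ℝ E) *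
        μ (Metric.ball 0 1) ≤
      ENNReal.ofReal ((1 + ε / 2) ^ Module.finrank ℝ E) * μ (Metric.ball 0 1) :=
    calc
      _ = μ (⋃ c ∈ s, Metric.ball c (ε / 2 : ℝ)) := by
        rw [measure_biUnion_finset hdisj fun c _ => measurableSet_ball]
        simp only [μ.addHaar_ball_of_pos _ hradius, Finset.sum_const, nsmul_eq_mul, mul_assoc]
      _ ≤ μ (Metric.ball (0 : E) (1 + ε / 2)) := measure_mono hsub
      _ = _ := μ.addHaar_ball_of_pos _ (by positivity)
  have hcard := (ENNReal.mul_le_mul_iff_left (Metric.measure_ball_pos μ _ zero_lt_one).ne'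
    measure_ball_lt_top.ne).1 hvolume
  have hreal := ENNReal.toReal_le_of_le_ofReal (by positivity) hcard
  rw [ENNReal.toReal_mul, ENNReal.toReal_natCast,
    ENNReal.toReal_ofReal (by positivity)] at hreal
  have hratio : (1 + 2 / ε : ℝ) = (1 + ε / 2) / (ε / 2) := by field_simp; ring
  rwa [hratio, div_pow, le_div_iff₀ (by positivity)]

theorem packingNumber_ne_top_of_isCompact {X : Type*} [PseudoEMetricSpace X] {A : Set X}
    (hε : 0 < ε) (hA : IsCompact A) : Metric.packingNumber ε A ≠ ⊤ := by
  obtain ⟨N, -, hfin, hcover⟩ :=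
    Metric.exists_finite_isCover_of_isCompact (half_pos hε).ne' hA
  have hle := (Metric.packingNumber_two_mul_le_externalCoveringNumber (ε / 2) A).trans
    hcover.externalCoveringNumber_le_encard
  rw [mul_div_cancel₀ ε two_ne_zero] at hle
  exact (hle.trans_lt hfin.encard_lt_top).ne

variable (E) in
theorem exists_isCover_sphere_card_le [FiniteDimensional ℝ E] (hε : 0 < ε) :
    ∃ s : Finset E, (s : Set E) ⊆ Metric.sphere 0 1 ∧
      Metric.IsCover ε (Metric.sphere (0 : E) 1) s ∧
      (s.card : ℝ) ≤ (1 + 2 / ε : ℝ) ^ Module.finrank ℝ E := by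
  have htop := packingNumber_ne_top_of_isCompact hε (isCompact_sphere (0 : E) 1)
  have hfin : (Metric.maximalSeparatedSet ε (Metric.sphere (0 : E) 1)).Finite := by
    rwa [← Set.encard_ne_top_iff, Metric.encard_maximalSeparatedSet htop]
  refine ⟨hfin.toFinset, ?_, ?_, card_le_of_isSeparated_of_subset_closedBall hε ?_ ?_⟩ <;>
    rw [hfin.coe_toFinset]
  · exact Metric.maximalSeparatedSet_subset
  · exact Metric.isCover_maximalSeparatedSet htop
  · exact Metric.maximalSeparatedSet_subset.trans Metric.sphere_subset_closedBall
  · exact Metric.isSeparated_maximalSeparatedSet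

theorem exists_norm_map_sub_le_of_isCover_sphere {s : Set E}
    (hs : Metric.IsCover ε (Metric.sphere (0 : E) 1) s) (T : E →L[ℝ] F) {v : E} (hv : ‖v‖ = 1) :
    ∃ u ∈ s, ‖T v - T u‖ ≤ ε * ‖T‖ := by
  obtain ⟨u, hu, huv⟩ := hs (mem_sphere_zero_iff_norm.2 hv)
  refine ⟨u, hu, ?_⟩
  have hdist : ‖v - u‖ ≤ ε := by
    rw [← dist_eq_norm]
    exact edist_le_coe.1 huv
  rw [← map_sub, mul_comm]
  exact T.le_opNorm_of_le hdist

theorem opNorm_le_of_isCover_sphere {s : Set E}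
    (hs : Metric.IsCover ε (Metric.sphere (0 : E) 1) s) (hε : ε < 1) (T : E →L[ℝ] F) {B : ℝ}
    (hB : 0 ≤ B) (hT : ∀ u ∈ s, ‖T u‖ ≤ B) : ‖T‖ ≤ B / (1 - ε) := by
  have hself : ‖T‖ ≤ B + ε * ‖T‖ := by
    refine T.opNorm_le_of_unit_norm (by positivity) fun v hv => ?_
    obtain ⟨u, hu, huv⟩ := exists_norm_map_sub_le_of_isCover_sphere hs T hv
    linarith [hT u hu, norm_le_norm_add_norm_sub (T u) (T v), norm_sub_rev (T u) (T v)]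
  rw [le_div_iff₀ (sub_pos.2 (by exact_mod_cast hε))]
  linarith

theorem mul_norm_le_of_isCover_sphere {s : Set E}
    (hs : Metric.IsCover ε (Metric.sphere (0 : E) 1) s) (T : E →L[ℝ] F) {b : ℝ}
    (hT : ∀ u ∈ s, b ≤ ‖T u‖) (v : E) : (b - ε * ‖T‖) * ‖v‖ ≤ ‖T v‖ := by
  rcases eq_or_ne v 0 with rfl | hv
  · simp
  have hunit : ‖‖v‖⁻¹ • v‖ = 1 := norm_smul_inv_norm (𝕜 := ℝ) hv
  obtain ⟨u, hu, huv⟩ := exists_norm_map_sub_le_of_isCover_sphere hs T hunit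
  have hlower : b - ε * ‖T‖ ≤ ‖T (‖v‖⁻¹ • v)‖ := by
    linarith [hT u hu, norm_le_norm_add_norm_sub (T (‖v‖⁻¹ • v)) (T u)]
  rw [map_smul, norm_smul, norm_inv, norm_norm, ← div_eq_inv_mul] at hlower
  exact (le_div_iff₀ (norm_pos_iff.2 hv)).1 hlower

variable {α : Type*} [MeasurableSpace α] {μ : Measure α}

theorem measure_biUnion_finset_le_card_mul {ι : Type*} (s : Finset ι) (A : ι → Set α) {δ : ℝ≥0∞}
    (h : ∀ i ∈ s, μ (A i) ≤ δ) : μ (⋃ i ∈ s, A i) ≤ s.card * δ := by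
  rw [← nsmul_eq_mul]
  exact (measure_biUnion_finset_le s A).trans (Finset.sum_le_card_nsmul s _ _ h)

theorem measure_lt_opNorm_le [FiniteDimensional ℝ E] (T : α → E →L[ℝ] F) (hε : 0 < ε) (hε1 : ε < 1)
    {B : ℝ} (hB : 0 ≤ B) {δ : ℝ≥0∞} (h : ∀ u, ‖u‖ = 1 → μ {x | B < ‖T x u‖} ≤ δ) :
    μ {x | B / (1 - ε) < ‖T x‖} ≤
      ENNReal.ofReal ((1 + 2 / ε) ^ Module.finrank ℝ E) * δ := by
  obtain ⟨s, hsphere, hcover, hcard⟩ := exists_isCover_sphere_card_le E hε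
  calc μ {x | B / (1 - ε) < ‖T x‖} ≤ μ (⋃ u ∈ s, {x | B < ‖T x u‖}) := by
        refine measure_mono fun x hx => by_contra fun hgood => (Set.mem_ofPred.1 hx).not_ge ?_
        simp only [Set.mem_iUnion, Set.mem_ofPred_eq, exists_prop, not_exists, not_and,
          not_lt] at hgood
        exact opNorm_le_of_isCover_sphere hcover hε1 (T x) hB hgood
    _ ≤ s.card * δ := measure_biUnion_finset_le_card_mul s _ fun u hu =>
        h u (mem_sphere_zero_iff_norm.1 (hsphere hu))
    _ ≤ _ := by
        rw [← ENNReal.ofReal_natCast]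
        gcongr

theorem measure_not_mul_norm_le [FiniteDimensional ℝ E] (T : α → E →L[ℝ] F) (hε : 0 < ε)
    {b M : ℝ} {δ : ℝ≥0∞} (h : ∀ u, ‖u‖ = 1 → μ {x | ‖T x u‖ < b} ≤ δ) :
    μ {x | ¬ ∀ v, (b - ε * M) * ‖v‖ ≤ ‖T x v‖} ≤
      μ {x | M < ‖T x‖} + ENNReal.ofReal ((1 + 2 / ε) ^ Module.finrank ℝ E) * δ := by
  obtain ⟨s, hsphere, hcover, hcard⟩ := exists_isCover_sphere_card_le E hε
  calc μ {x | ¬ ∀ v, (b - ε * M) * ‖v‖ ≤ ‖T x v‖}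
      ≤ μ ({x | M < ‖T x‖} ∪ ⋃ u ∈ s, {x | ‖T x u‖ < b}) := by
        refine measure_mono fun x hx => by_contra fun hgood => hx fun v => ?_
        simp only [Set.mem_union, Set.mem_iUnion, Set.mem_ofPred_eq, exists_prop, not_or,
          not_exists, not_and, not_lt] at hgood
        refine le_trans ?_ (mul_norm_le_of_isCover_sphere hcover (T x) hgood.2 v)
        gcongr
        exact hgood.1
    _ ≤ μ {x | M < ‖T x‖} + s.card * δ := (measure_union_le _ _).trans <| by
        gcongr
        exact measure_biUnion_finset_le_card_mul s _ fun u hu =>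
          h u (mem_sphere_zero_iff_norm.1 (hsphere hu))
    _ ≤ _ := by
        rw [← ENNReal.ofReal_natCast (n := s.card)]
        gcongr

end SphereNet

section ChiSquare

theorem integral_exp_mul_sq_gaussianReal {s : ℝ} (hs : s < 1 / 2) :
    ∫ x, Real.exp (s * x ^ 2) ∂gaussianReal 0 1 = (√(1 - 2 * s))⁻¹ := by
  have : 1 / 2 - s ≠ 0 := by linarith
  have hdensity (x : ℝ) : gaussianPDFReal 0 1 x • Real.exp (s * x ^ 2) =
      (√(2 * Real.pi))⁻¹ * Real.exp (-(1 / 2 - s) * x ^ 2) := by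
    simp only [gaussianPDFReal, smul_eq_mul, NNReal.coe_one, mul_one, sub_zero, mul_assoc,
      ← Real.exp_add]
    ring_nf
  rw [integral_gaussianReal_eq_integral_smul one_ne_zero]
  simp_rw [hdensity]
  rw [integral_const_mul, integral_gaussian, ← Real.sqrt_inv, ← Real.sqrt_inv,
    ← Real.sqrt_mul (by positivity)]
  congr 1
  field_simp

theorem integrable_exp_mul_sq_gaussianReal {s : ℝ} (hs : s < 1 / 2) :
    Integrable (fun x => Real.exp (s * x ^ 2)) (gaussianReal 0 1) := by
  have hpos : 0 < 1 - 2 * s := by linarith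
  refine Integrable.of_integral_ne_zero ?_
  rw [integral_exp_mul_sq_gaussianReal hs]
  positivity

theorem inv_sqrt_one_add_le_exp {x : ℝ} (hx : -1 < x) :
    (√(1 + x))⁻¹ ≤ Real.exp (-(x / (2 * (1 + x)))) := by
  have hpos : 0 < 1 + x := by linarith
  rw [Real.exp_neg]
  refine inv_anti₀ (Real.exp_pos _) (Real.le_sqrt_of_sq_le ?_)
  rw [← Real.exp_nat_mul, ← Real.le_log_iff_exp_le hpos]
  convert Real.one_sub_inv_le_log_of_pos hpos using 1
  push_cast
  field_simp
  ring

variable {ι : Type*} [Fintype ι] {w : ι → ℝ} {m t : ℝ}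

theorem integrable_exp_mul_sum_mul_sq (ht : ∀ j, t * w j < 1 / 2) :
    Integrable (fun g : ι → ℝ => Real.exp (t * ∑ j, w j * g j ^ 2))
      (Measure.pi fun _ => gaussianReal 0 1) := by
  simp_rw [Finset.mul_sum, ← mul_assoc, Real.exp_sum]
  exact Integrable.fintype_prod fun j => integrable_exp_mul_sq_gaussianReal (ht j)

theorem mgf_sum_mul_sq_gaussian (ht : ∀ j, t * w j < 1 / 2) :
    mgf (fun g : ι → ℝ => ∑ j, w j * g j ^ 2) (Measure.pi fun _ => gaussianReal 0 1) t =
      ∏ j, (√(1 - 2 * (t * w j)))⁻¹ := by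
  simp_rw [mgf, Finset.mul_sum, ← mul_assoc, Real.exp_sum]
  rw [integral_fintype_prod_eq_prod (fun j x => Real.exp (t * w j * x ^ 2))]
  exact Finset.prod_congr rfl fun j _ => by rw [integral_exp_mul_sq_gaussianReal (ht j), mul_assoc]

theorem mgf_sum_mul_sq_gaussian_le {c : ℝ} (ht : ∀ j, t * w j < 1 / 2)
    (hc : ∀ j, t * w j / (1 - 2 * (t * w j)) ≤ c * (t * w j)) :
    mgf (fun g : ι → ℝ => ∑ j, w j * g j ^ 2) (Measure.pi fun _ => gaussianReal 0 1) t ≤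
      Real.exp (c * (t * ∑ j, w j)) := by
  rw [mgf_sum_mul_sq_gaussian ht, Finset.mul_sum, Finset.mul_sum, Real.exp_sum]
  gcongr with j
  have hpos : 0 < 1 - 2 * (t * w j) := by linarith [ht j]
  have hexp := inv_sqrt_one_add_le_exp (x := -(2 * (t * w j))) (by linarith)
  rw [← sub_eq_add_neg] at hexp
  refine hexp.trans (Real.exp_le_exp.2 (le_trans (le_of_eq ?_) (hc j)))
  field_simp

theorem measureReal_sum_mul_sq_gaussian_ge_le (hm : 0 < m) (hw : ∀ j, 0 ≤ w j)
    (hwm : ∀ j, w j ≤ m) (K : ℝ) :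
    (Measure.pi fun _ : ι => gaussianReal 0 1).real
      {g | 2 * ∑ j, w j + 4 * K * m ≤ ∑ j, w j * g j ^ 2} ≤ Real.exp (-K) := by
  set t : ℝ := 1 / (4 * m) with ht
  have ht0 : 0 < t := by positivity
  have htw0 (j : ι) : 0 ≤ t * w j := mul_nonneg ht0.le (hw j)
  have htw (j : ι) : t * w j ≤ 1 / 4 := by
    rw [ht, one_div_mul_eq_div, div_le_iff₀ (by positivity)]
    linarith [hwm j]
  have hlt (j : ι) : t * w j < 1 / 2 := by linarith [htw j]
  have hmgf := mgf_sum_mul_sq_gaussian_le (c := 2) hlt fun j => by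
    rw [div_le_iff₀ (by linarith [htw j])]
    nlinarith [htw j, htw0 j]
  refine (measure_ge_le_exp_mul_mgf _ ht0.le (integrable_exp_mul_sum_mul_sq hlt)).trans ?_
  calc _ ≤ Real.exp (-t * (2 * ∑ j, w j + 4 * K * m)) * Real.exp (2 * (t * ∑ j, w j)) := by gcongr
    _ = Real.exp (-K) := by
        rw [← Real.exp_add, ht]
        congr 1
        field_simp
        ring

theorem measureReal_sum_mul_sq_gaussian_le_le (hm : 0 < m) (hw : ∀ j, 0 ≤ w j)
    (hwm : ∀ j, w j ≤ m) :
    (Measure.pi fun _ : ι => gaussianReal 0 1).real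
      {g | ∑ j, w j * g j ^ 2 ≤ (∑ j, w j) / 4} ≤ Real.exp (-((∑ j, w j) / (8 * m))) := by
  set t : ℝ := -(1 / (2 * m)) with ht
  have ht0 : t ≤ 0 := neg_nonpos.2 (by positivity)
  have htw0 (j : ι) : t * w j ≤ 0 := mul_nonpos_of_nonpos_of_nonneg ht0 (hw j)
  have htw (j : ι) : -(1 / 2) ≤ t * w j := by
    rw [ht, neg_mul, neg_le_neg_iff, one_div_mul_eq_div, div_le_iff₀ (by positivity)]
    linarith [hwm j]
  have hlt (j : ι) : t * w j < 1 / 2 := by linarith [htw0 j]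
  have hmgf := mgf_sum_mul_sq_gaussian_le (c := 1 / 2) hlt fun j => by
    rw [div_le_iff₀ (by linarith [htw0 j])]
    nlinarith [htw j, htw0 j]
  refine (measure_le_le_exp_mul_mgf _ ht0 (integrable_exp_mul_sum_mul_sq hlt)).trans ?_
  calc _ ≤ Real.exp (-t * ((∑ j, w j) / 4)) * Real.exp (1 / 2 * (t * ∑ j, w j)) := by gcongr
    _ = Real.exp (-((∑ j, w j) / (8 * m))) := by
        rw [← Real.exp_add, ht]
        congr 1
        field_simp
        ring

end ChiSquare

section GaussianDesign

variable {ι κ : Type*} [Fintype ι]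

theorem continuous_mulVec (A : Matrix κ ι ℝ) : Continuous fun g : ι → ℝ => A *ᵥ g :=
  continuous_const.matrix_mulVec continuous_id

theorem measurable_vecMul_of (v : ι → ℝ) : Measurable fun x : ι → κ → ℝ => v ᵥ* Matrix.of x := by
  refine measurable_pi_lambda _ fun j => ?_
  simp only [vecMul, dotProduct, of_apply]
  fun_prop

theorem integral_cexp_mul_gaussianReal (c : ℝ) :
    ∫ x : ℝ, Complex.exp ((c * x : ℝ) * Complex.I) ∂(gaussianReal 0 1) =
      Complex.exp (-(c ^ 2 / 2 : ℝ)) := by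
  have h := charFun_gaussianReal (μ := 0) (v := 1) c
  rw [charFun_apply_real] at h
  push_cast
  rw [h]
  simp

theorem integral_cexp_dotProduct_gaussian (b : ι → ℝ) :
    ∫ g : ι → ℝ, Complex.exp ((b ⬝ᵥ g : ℝ) * Complex.I) ∂(Measure.pi fun _ => gaussianReal 0 1) =
      Complex.exp (-(b ⬝ᵥ b / 2 : ℝ)) := by
  simp_rw [dotProduct, Complex.ofReal_sum, Finset.sum_mul, Complex.exp_sum]
  rw [integral_fintype_prod_eq_prod (fun j x => Complex.exp ((b j * x : ℝ) * Complex.I))]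
  simp_rw [integral_cexp_mul_gaussianReal, ← Complex.exp_sum, Finset.sum_neg_distrib,
    ← sq, Finset.sum_div, Complex.ofReal_sum]

theorem ext_of_integral_cexp_dotProduct {μ ν : Measure (ι → ℝ)} [IsFiniteMeasure μ]
    [IsFiniteMeasure ν]
    (h : ∀ b : ι → ℝ, ∫ y, Complex.exp ((b ⬝ᵥ y : ℝ) * Complex.I) ∂μ =
      ∫ y, Complex.exp ((b ⬝ᵥ y : ℝ) * Complex.I) ∂ν) : μ = ν := by
  refine Measure.ext_of_charFunDual (funext fun L => ?_)
  obtain ⟨l, hl⟩ : ∃ l : ι → ℝ, ∀ y, L y = l ⬝ᵥ y := by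
    refine ⟨fun j => L (Pi.single j 1), fun y => ?_⟩
    conv_lhs => rw [pi_eq_sum_univ' y]
    simp only [map_sum, map_smul, smul_eq_mul, dotProduct, mul_comm]
  simp_rw [charFunDual_apply, hl]
  exact h l

theorem integral_cexp_dotProduct_map {α : Type*} [MeasurableSpace α] {μ : Measure α} {f : α → ι → ℝ}
    (hf : Measurable f) (b : ι → ℝ) :
    ∫ y, Complex.exp ((b ⬝ᵥ y : ℝ) * Complex.I) ∂(μ.map f) =
      ∫ x, Complex.exp ((b ⬝ᵥ f x : ℝ) * Complex.I) ∂μ := by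
  refine integral_map hf.aemeasurable (Continuous.aestronglyMeasurable ?_)
  unfold dotProduct
  fun_prop

variable [Fintype κ]

theorem measurable_vecMul_of_mul {ν : Type*} [Countable ν] (v : κ → ℝ) (A : Matrix ι ν ℝ) :
    Measurable fun x : κ → ι → ℝ => v ᵥ* (Matrix.of x * A) := by
  simp_rw [← vecMul_vecMul, ← mulVec_transpose A]
  exact (continuous_mulVec _).measurable.comp (measurable_vecMul_of v)

theorem map_mulVec_gaussian [DecidableEq κ] {A : Matrix κ ι ℝ} (hA : A * Aᵀ = 1) :
    (Measure.pi fun _ : ι => gaussianReal 0 1).map (A *ᵥ ·) =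
      Measure.pi fun _ : κ => gaussianReal 0 1 := by
  have hmeas := (continuous_mulVec A).measurable
  have := Measure.isProbabilityMeasure_map (μ := Measure.pi fun _ : ι => gaussianReal 0 1)
    hmeas.aemeasurable
  refine ext_of_integral_cexp_dotProduct fun b => ?_
  rw [integral_cexp_dotProduct_map hmeas]
  simp_rw [dotProduct_mulVec]
  rw [integral_cexp_dotProduct_gaussian, integral_cexp_dotProduct_gaussian, ← dotProduct_mulVec,
    ← mulVec_transpose, mulVec_mulVec, hA, one_mulVec]

theorem map_vecMul_pi_gaussian {v : κ → ℝ} (hv : v ⬝ᵥ v = 1) :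
    (Measure.pi fun _ : κ => Measure.pi fun _ : ι => gaussianReal 0 1).map
        (fun x => v ᵥ* Matrix.of x) = Measure.pi fun _ : ι => gaussianReal 0 1 := by
  have hmeas := measurable_vecMul_of (κ := ι) v
  have := Measure.isProbabilityMeasure_map
    (μ := Measure.pi fun _ : κ => Measure.pi fun _ : ι => gaussianReal 0 1) hmeas.aemeasurable
  refine ext_of_integral_cexp_dotProduct fun b => ?_
  have hsplit (x : κ → ι → ℝ) : b ⬝ᵥ v ᵥ* Matrix.of x = ∑ i, (v i • b) ⬝ᵥ x i := by
    rw [dotProduct_comm, ← dotProduct_mulVec]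
    exact Finset.sum_congr rfl fun i _ => by
      rw [smul_dotProduct, dotProduct_comm b]
      rfl
  rw [integral_cexp_dotProduct_map hmeas]
  simp_rw [hsplit, Complex.ofReal_sum, Finset.sum_mul, Complex.exp_sum]
  rw [integral_fintype_prod_eq_prod
    (fun i (y : ι → ℝ) => Complex.exp (((v i • b) ⬝ᵥ y : ℝ) * Complex.I))]
  simp_rw [integral_cexp_dotProduct_gaussian, ← Complex.exp_sum, Finset.sum_neg_distrib,
    ← Complex.ofReal_sum, ← Finset.sum_div, smul_dotProduct, dotProduct_smul, smul_eq_mul,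
    ← mul_assoc, ← Finset.sum_mul]
  rw [show ∑ i, v i * v i = 1 from hv, one_mul]

variable {n p : ℕ} {lam : ℕ → ℝ} {Porth : Matrix (Fin p) (Fin p) ℝ}

instance isProbabilityMeasure_mvGaussian : IsProbabilityMeasure (mvGaussian p lam Porth) := by
  have : IsProbabilityMeasure (_root_.stdGaussian p) := by
    unfold _root_.stdGaussian
    infer_instance
  exact Measure.isProbabilityMeasure_map (continuous_mulVec _).measurable.aemeasurable

theorem pi_mvGaussian_eq_map :
    (Measure.pi fun _ : Fin n => mvGaussian p lam Porth) =
      (Measure.pi fun _ : Fin n => Measure.pi fun _ : Fin p => gaussianReal 0 1).map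
        fun g i => covHalf p lam Porth *ᵥ g i :=
  (Measure.pi_map_pi (hμ := fun _ => inferInstanceAs (SigmaFinite (mvGaussian p lam Porth)))
    fun _ => (continuous_mulVec _).measurable.aemeasurable).symm

theorem of_covHalf_mulVec_mul (hP : Porthᵀ * Porth = 1) (g : Fin n → Fin p → ℝ) :
    Matrix.of (fun i => covHalf p lam Porth *ᵥ g i) * Porth =
      Matrix.of g * Porth * Matrix.diagonal fun j : Fin p => √(lam (j + 1)) := by
  have hsymm : (covHalf p lam Porth)ᵀ = covHalf p lam Porth := by
    simp only [covHalf, transpose_mul, transpose_transpose, diagonal_transpose, Matrix.mul_assoc]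
  have hof : Matrix.of (fun i => covHalf p lam Porth *ᵥ g i) =
      Matrix.of g * covHalf p lam Porth := by
    refine Matrix.ext fun i j => ?_
    calc (covHalf p lam Porth *ᵥ g i) j = (g i ᵥ* (covHalf p lam Porth)ᵀ) j := by
          rw [vecMul_transpose]
      _ = (Matrix.of g * covHalf p lam Porth) i j := by
          rw [hsymm]
          rfl
  rw [hof, covHalf, Matrix.mul_assoc, Matrix.mul_assoc _ Porthᵀ, hP, Matrix.mul_one,
    ← Matrix.mul_assoc]

theorem map_vecMul_mul_pi_mvGaussian (hP : Porthᵀ * Porth = 1) {v : Fin n → ℝ}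
    (hv : v ⬝ᵥ v = 1) :
    (Measure.pi fun _ : Fin n => mvGaussian p lam Porth).map
        (fun x => v ᵥ* (Matrix.of x * Porth)) =
      (Measure.pi fun _ : Fin p => gaussianReal 0 1).map
        fun g (j : Fin p) => √(lam (j + 1)) * g j := by
  have hrows := measurable_vecMul_of_mul v Porth
  have hcov : Measurable fun (g : Fin n → Fin p → ℝ) i => covHalf p lam Porth *ᵥ g i :=
    measurable_pi_lambda _ fun i => (continuous_mulVec _).measurable.comp (measurable_pi_apply i)
  have hdiag : Measurable fun (g : Fin p → ℝ) (j : Fin p) => √(lam (j + 1)) * g j := by fun_prop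
  have hfactor : (fun x : Fin n → Fin p → ℝ => v ᵥ* (Matrix.of x * Porth)) ∘
        (fun g i => covHalf p lam Porth *ᵥ g i) =
      (fun (g : Fin p → ℝ) (j : Fin p) => √(lam (j + 1)) * g j) ∘
        (Porthᵀ *ᵥ ·) ∘ fun g => v ᵥ* Matrix.of g := by
    funext g j
    simp only [Function.comp_apply]
    rw [of_covHalf_mulVec_mul hP, ← vecMul_vecMul, vecMul_diagonal, ← vecMul_vecMul,
      mulVec_transpose, mul_comm]
  rw [pi_mvGaussian_eq_map, Measure.map_map hrows hcov, hfactor, ← Measure.map_map hdiag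
    ((continuous_mulVec _).measurable.comp (measurable_vecMul_of v)), ← Measure.map_map
    (continuous_mulVec _).measurable (measurable_vecMul_of v), map_vecMul_pi_gaussian hv,
    map_mulVec_gaussian (by rwa [transpose_transpose])]

end GaussianDesign

section WeightedForm

section Definition

variable {ι κ : Type*} [Fintype ι] [Fintype κ]

/-- The quadratic form `v ↦ ∑ j, a j * (zᵀ v) j ^ 2` of a matrix `z` whose columns carry the
weights `a`. It is applied to the design matrix expressed in an eigenbasis of the covariance. -/
def weightedForm (a : κ → ℝ) (z : Matrix ι κ ℝ) (v : ι → ℝ) : ℝ :=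
  ∑ j, a j * (v ᵥ* z) j ^ 2

/-- The linear map `v ↦ diag(√a) zᵀ v` between Euclidean spaces, whose squared norm is
`weightedForm a z`. -/
def weightedMap (a : κ → ℝ) (z : Matrix ι κ ℝ) : EuclideanSpace ℝ ι →L[ℝ] EuclideanSpace ℝ κ :=
  LinearMap.toContinuousLinearMap (Matrix.toEuclideanLin (Matrix.diagonal (fun j => √(a j)) * zᵀ))

theorem norm_weightedMap_sq {a : κ → ℝ} (ha : ∀ j, 0 ≤ a j) (z : Matrix ι κ ℝ)
    (v : EuclideanSpace ℝ ι) : ‖weightedMap a z v‖ ^ 2 = weightedForm a z v.ofLp := by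
  rw [EuclideanSpace.norm_sq_eq, weightedForm]
  refine Finset.sum_congr rfl fun j _ => ?_
  have hentry : weightedMap a z v j = √(a j) * (v.ofLp ᵥ* z) j := by
    simp only [weightedMap, LinearMap.coe_toContinuousLinearMap', Matrix.ofLp_toLpLin,
      toLin'_apply, ← mulVec_mulVec, mulVec_diagonal, mulVec_transpose]
  rw [hentry, Real.norm_eq_abs, sq_abs, mul_pow, Real.sq_sqrt (ha j)]

end Definition

theorem enorm2_eq_norm {m : ℕ} (v : Fin m → ℝ) : enorm2 v = ‖WithLp.toLp 2 v‖ := by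
  simp [enorm2, EuclideanSpace.norm_eq]

theorem enorm2_sq {m : ℕ} (v : Fin m → ℝ) : enorm2 v ^ 2 = v ⬝ᵥ v := by
  rw [enorm2, Real.sq_sqrt (Finset.sum_nonneg fun i _ => sq_nonneg (v i))]
  simp only [sq, dotProduct]

variable {n p : ℕ} {lam : ℕ → ℝ} {Porth : Matrix (Fin p) (Fin p) ℝ} {a : Fin p → ℝ} {m : ℝ}

theorem measure_weightedForm_mem (hlam : ∀ j : Fin p, 0 ≤ lam (j + 1)) (hP : Porthᵀ * Porth = 1)
    (a : Fin p → ℝ) {v : Fin n → ℝ} (hv : v ⬝ᵥ v = 1) {B : Set ℝ} (hB : MeasurableSet B) :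
    (Measure.pi fun _ : Fin n => mvGaussian p lam Porth)
        {x | weightedForm a (Matrix.of x * Porth) v ∈ B} =
      (Measure.pi fun _ : Fin p => gaussianReal 0 1)
        {g | ∑ j, a j * lam (j + 1) * g j ^ 2 ∈ B} := by
  let q : (Fin p → ℝ) → ℝ := fun y => ∑ j, a j * y j ^ 2
  have hq : Measurable q := by fun_prop
  have hdiag : Measurable fun (g : Fin p → ℝ) (j : Fin p) => √(lam (j + 1)) * g j := by fun_prop
  calc _ = ((Measure.pi fun _ : Fin n => mvGaussian p lam Porth).map
          fun x => v ᵥ* (Matrix.of x * Porth)) (q ⁻¹' B) :=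
        (Measure.map_apply (measurable_vecMul_of_mul v Porth) (hq hB)).symm
    _ = (Measure.pi fun _ : Fin p => gaussianReal 0 1)
          {g | q (fun j : Fin p => √(lam (j + 1)) * g j) ∈ B} := by
        rw [map_vecMul_mul_pi_mvGaussian hP hv, Measure.map_apply hdiag (hq hB)]
        rfl
    _ = _ := by simp only [q, mul_pow, Real.sq_sqrt (hlam _), mul_assoc]

theorem measure_sqrt_lt_norm_weightedMap_le (hlam : ∀ j : Fin p, 0 ≤ lam (j + 1))
    (hP : Porthᵀ * Porth = 1) (ha : ∀ j, 0 ≤ a j) (hm : 0 < m)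
    (ham : ∀ j : Fin p, a j * lam (j + 1) ≤ m) {u : EuclideanSpace ℝ (Fin n)} (hu : ‖u‖ = 1) :
    (Measure.pi fun _ : Fin n => mvGaussian p lam Porth)
        {x | √(2 * ∑ j : Fin p, a j * lam (j + 1) + 20 * n * m) <
          ‖weightedMap a (Matrix.of x * Porth) u‖} ≤ ENNReal.ofReal (Real.exp (-(5 * n))) := by
  have hunit : u.ofLp ⬝ᵥ u.ofLp = 1 := by rw [← enorm2_sq, enorm2_eq_norm, hu, one_pow]
  calc _ ≤ (Measure.pi fun _ : Fin n => mvGaussian p lam Porth)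
          {x | weightedForm a (Matrix.of x * Porth) u.ofLp ∈
            Set.Ici (2 * ∑ j : Fin p, a j * lam (j + 1) + 4 * (5 * n) * m)} := by
        refine measure_mono fun x hx => ?_
        have hsq := (Real.lt_sq_of_sqrt_lt hx).le
        rw [norm_weightedMap_sq ha] at hsq
        rw [Set.mem_ofPred, Set.mem_Ici]
        linarith
    _ ≤ _ := by
        rw [measure_weightedForm_mem hlam hP a hunit measurableSet_Ici, ← ofReal_measureReal]
        exact ENNReal.ofReal_le_ofReal (measureReal_sum_mul_sq_gaussian_ge_le hm
          (fun j => mul_nonneg (ha j) (hlam j)) ham _)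

theorem measure_norm_weightedMap_lt_le (hlam : ∀ j : Fin p, 0 ≤ lam (j + 1))
    (hP : Porthᵀ * Porth = 1) (ha : ∀ j, 0 ≤ a j) (hm : 0 < m)
    (ham : ∀ j : Fin p, a j * lam (j + 1) ≤ m)
    (hsum : 40 * n * m ≤ ∑ j : Fin p, a j * lam (j + 1))
    {u : EuclideanSpace ℝ (Fin n)} (hu : ‖u‖ = 1) :
    (Measure.pi fun _ : Fin n => mvGaussian p lam Porth)
        {x | ‖weightedMap a (Matrix.of x * Porth) u‖ < √(∑ j : Fin p, a j * lam (j + 1)) / 2} ≤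
      ENNReal.ofReal (Real.exp (-(5 * n))) := by
  have hunit : u.ofLp ⬝ᵥ u.ofLp = 1 := by rw [← enorm2_sq, enorm2_eq_norm, hu, one_pow]
  have hw (j : Fin p) : 0 ≤ a j * lam (j + 1) := mul_nonneg (ha j) (hlam j)
  calc _ ≤ (Measure.pi fun _ : Fin n => mvGaussian p lam Porth)
          {x | weightedForm a (Matrix.of x * Porth) u.ofLp ∈
            Set.Iic ((∑ j : Fin p, a j * lam (j + 1)) / 4)} := by
        refine measure_mono fun x hx => ?_
        have hsq := pow_le_pow_left₀ (norm_nonneg _) (Set.mem_ofPred.1 hx).le 2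
        rw [norm_weightedMap_sq ha, div_pow,
          Real.sq_sqrt (Finset.sum_nonneg fun j _ => hw j)] at hsq
        rw [Set.mem_ofPred, Set.mem_Iic]
        linarith
    _ ≤ ENNReal.ofReal (Real.exp (-((∑ j : Fin p, a j * lam (j + 1)) / (8 * m)))) := by
        rw [measure_weightedForm_mem hlam hP a hunit measurableSet_Iic, ← ofReal_measureReal]
        exact ENNReal.ofReal_le_ofReal (measureReal_sum_mul_sq_gaussian_le_le hm hw ham)
    _ ≤ _ := by
        gcongr
        rw [le_div_iff₀ (by positivity)]
        linarith

theorem netCard_mul_exp_le (n : ℕ) :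
    ENNReal.ofReal ((1 + 2 / (1 / 16 : NNReal)) ^ n) * ENNReal.ofReal (Real.exp (-(5 * n))) ≤
      ENNReal.ofReal (Real.exp (-n)) := by
  have hbase : (33 : ℝ) ≤ Real.exp 4 := by
    calc (33 : ℝ) ≤ 2.7 ^ 4 := by norm_num
      _ ≤ Real.exp 1 ^ 4 := by
          gcongr
          linarith [Real.exp_one_gt_d9]
      _ = Real.exp 4 := by
          rw [← Real.exp_nat_mul]
          norm_num
  rw [← ENNReal.ofReal_mul (by positivity)]
  refine ENNReal.ofReal_le_ofReal ?_
  calc (1 + 2 / (1 / 16 : NNReal) : ℝ) ^ n * Real.exp (-(5 * n))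
      = 33 ^ n * Real.exp (-(5 * n)) := by norm_num
    _ ≤ Real.exp 4 ^ n * Real.exp (-(5 * n)) := by gcongr
    _ = Real.exp (-n) := by
        rw [← Real.exp_nat_mul, ← Real.exp_add]
        ring_nf

theorem measure_lt_norm_weightedMap_le (hlam : ∀ j : Fin p, 0 ≤ lam (j + 1))
    (hP : Porthᵀ * Porth = 1) (ha : ∀ j, 0 ≤ a j) (hm : 0 < m)
    (ham : ∀ j : Fin p, a j * lam (j + 1) ≤ m) :
    (Measure.pi fun _ : Fin n => mvGaussian p lam Porth)
        {x | 16 / 15 * √(2 * ∑ j : Fin p, a j * lam (j + 1) + 20 * n * m) <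
          ‖weightedMap a (Matrix.of x * Porth)‖} ≤ ENNReal.ofReal (Real.exp (-n)) := by
  have hnet := measure_lt_opNorm_le (μ := Measure.pi fun _ : Fin n => mvGaussian p lam Porth)
    (fun x => weightedMap a (Matrix.of x * Porth)) (ε := 1 / 16) (by norm_num)
    (by rw [← NNReal.coe_lt_coe]; norm_num) (Real.sqrt_nonneg _)
    fun u hu => measure_sqrt_lt_norm_weightedMap_le hlam hP ha hm ham hu
  rw [finrank_euclideanSpace_fin] at hnet
  have hradius (B : ℝ) : B / (1 - (1 / 16 : NNReal)) = 16 / 15 * B := by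
    norm_num
    ring
  rw [hradius] at hnet
  exact hnet.trans (netCard_mul_exp_le n)

theorem measure_not_weightedForm_le (hlam : ∀ j : Fin p, 0 ≤ lam (j + 1))
    (hP : Porthᵀ * Porth = 1) (ha : ∀ j, 0 ≤ a j) (hm : 0 < m)
    (ham : ∀ j : Fin p, a j * lam (j + 1) ≤ m) :
    (Measure.pi fun _ : Fin n => mvGaussian p lam Porth)
        {x | ¬ ∀ v, weightedForm a (Matrix.of x * Porth) v ≤
          256 / 225 * (2 * ∑ j : Fin p, a j * lam (j + 1) + 20 * n * m) * enorm2 v ^ 2} ≤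
      ENNReal.ofReal (Real.exp (-n)) := by
  refine le_trans (measure_mono fun x hx => ?_) (measure_lt_norm_weightedMap_le hlam hP ha hm ham)
  refine Set.mem_ofPred.2 (not_le.1 fun hnorm => hx fun v => ?_)
  have hB : 0 ≤ 2 * ∑ j : Fin p, a j * lam (j + 1) + 20 * n * m := by
    have hsum : 0 ≤ ∑ j : Fin p, a j * lam (j + 1) :=
      Finset.sum_nonneg fun j _ => mul_nonneg (ha j) (hlam j)
    positivity
  set T := weightedMap a (Matrix.of x * Porth)
  calc weightedForm a (Matrix.of x * Porth) v = ‖T (WithLp.toLp 2 v)‖ ^ 2 :=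
        (norm_weightedMap_sq ha _ _).symm
    _ ≤ (16 / 15 * √(2 * ∑ j : Fin p, a j * lam (j + 1) + 20 * n * m) * enorm2 v) ^ 2 := by
        rw [enorm2_eq_norm]
        gcongr
        exact T.le_of_opNorm_le hnorm _
    _ = _ := by
        rw [mul_pow, mul_pow, Real.sq_sqrt hB]
        norm_num

theorem measure_not_le_weightedForm (hlam : ∀ j : Fin p, 0 ≤ lam (j + 1))
    (hP : Porthᵀ * Porth = 1) (ha : ∀ j, 0 ≤ a j) (hm : 0 < m)
    (ham : ∀ j : Fin p, a j * lam (j + 1) ≤ m)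
    (hsum : 80 * n * m ≤ ∑ j : Fin p, a j * lam (j + 1)) :
    (Measure.pi fun _ : Fin n => mvGaussian p lam Porth)
        {x | ¬ ∀ v, 4 / 25 * (∑ j : Fin p, a j * lam (j + 1)) * enorm2 v ^ 2 ≤
          weightedForm a (Matrix.of x * Porth) v} ≤
      2 * ENNReal.ofReal (Real.exp (-n)) := by
  set R := ∑ j : Fin p, a j * lam (j + 1)
  have hR : 0 ≤ R := Finset.sum_nonneg fun j _ => mul_nonneg (ha j) (hlam j)
  have hsqrt : √(2 * R + 20 * n * m) ≤ 3 / 2 * √R := by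
    refine Real.sqrt_le_iff.2 ⟨by positivity, ?_⟩
    rw [mul_pow, Real.sq_sqrt hR]
    linarith
  have hnet := measure_not_mul_norm_le (μ := Measure.pi fun _ : Fin n => mvGaussian p lam Porth)
    (fun x => weightedMap a (Matrix.of x * Porth)) (ε := 1 / 16) (by norm_num)
    (M := 16 / 15 * √(2 * R + 20 * n * m))
    fun u hu => measure_norm_weightedMap_lt_le hlam hP ha hm ham
      (le_trans (by gcongr; norm_num) hsum) hu
  rw [finrank_euclideanSpace_fin] at hnet
  rw [two_mul]
  refine le_trans (measure_mono fun x hx => Set.mem_ofPred.2 fun hlower => hx fun v => ?_)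
    (hnet.trans (add_le_add (measure_lt_norm_weightedMap_le hlam hP ha hm ham)
      (netCard_mul_exp_le n)))
  have hcoer : 2 / 5 * √R ≤ √R / 2 - (1 / 16 : NNReal) * (16 / 15 * √(2 * R + 20 * n * m)) := by
    norm_num
    linarith
  calc 4 / 25 * R * enorm2 v ^ 2 = (2 / 5 * √R * enorm2 v) ^ 2 := by
        rw [mul_pow, mul_pow, Real.sq_sqrt hR]
        norm_num
    _ ≤ ‖weightedMap a (Matrix.of x * Porth) (WithLp.toLp 2 v)‖ ^ 2 := by
        rw [enorm2_eq_norm]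
        gcongr
        exact (mul_le_mul_of_nonneg_right hcoer (norm_nonneg _)).trans (hlower _)
    _ = _ := norm_weightedMap_sq ha _ _

end WeightedForm

section Interpolation

theorem enorm2_nonneg {m : ℕ} (v : Fin m → ℝ) : 0 ≤ enorm2 v := Real.sqrt_nonneg _

theorem enorm2_add_le {m : ℕ} (v w : Fin m → ℝ) : enorm2 (v + w) ≤ enorm2 v + enorm2 w := by
  simp only [enorm2_eq_norm, WithLp.toLp_add]
  exact norm_add_le _ _

theorem enorm2_sub_le {m : ℕ} (v w : Fin m → ℝ) : enorm2 (v - w) ≤ enorm2 v + enorm2 w := by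
  simp only [enorm2_eq_norm, WithLp.toLp_sub]
  exact norm_sub_le _ _

variable {ι κ : Type*} [Fintype ι] [Fintype κ]

theorem dotProduct_self_nonneg (v : ι → ℝ) : 0 ≤ v ⬝ᵥ v := by
  simpa only [star_trivial] using dotProduct_star_self_nonneg v

theorem dotProduct_sq_le (v w : ι → ℝ) : (v ⬝ᵥ w) ^ 2 ≤ (v ⬝ᵥ v) * (w ⬝ᵥ w) := by
  simpa only [dotProduct, sq] using Finset.sum_mul_sq_le_sq_mul_sq Finset.univ v w

theorem dotProduct_mul_transpose_mulVec (x : Matrix ι κ ℝ) (v : ι → ℝ) :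
    v ⬝ᵥ (x * xᵀ) *ᵥ v = (v ᵥ* x) ⬝ᵥ (v ᵥ* x) := by
  rw [← mulVec_mulVec, dotProduct_mulVec, mulVec_transpose]

theorem surjective_mul_transpose_mulVec {x : Matrix ι κ ℝ} {c : ℝ} (hc : 0 < c)
    (hx : ∀ v, c * (v ⬝ᵥ v) ≤ (v ᵥ* x) ⬝ᵥ (v ᵥ* x)) :
    Function.Surjective (x * xᵀ).mulVecLin := by
  refine LinearMap.injective_iff_surjective.1 ((injective_iff_map_eq_zero _).2 fun v hv => ?_)
  have hquad := dotProduct_mul_transpose_mulVec x v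
  rw [← mulVecLin_apply, hv, dotProduct_zero] at hquad
  have hle : v ⬝ᵥ v ≤ 0 := nonpos_of_mul_nonpos_right (hquad ▸ hx v) hc
  exact dotProduct_self_eq_zero.1 (le_antisymm hle (dotProduct_self_nonneg v))

theorem exists_mulVec_eq_of_coercive {x : Matrix ι κ ℝ} {c : ℝ} (hc : 0 < c)
    (hx : ∀ v, c * (v ⬝ᵥ v) ≤ (v ᵥ* x) ⬝ᵥ (v ᵥ* x)) (y : ι → ℝ) :
    ∃ u, x *ᵥ u = y ∧ c * (u ⬝ᵥ u) ≤ y ⬝ᵥ y := by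
  obtain ⟨w, hw⟩ := surjective_mul_transpose_mulVec hc hx y
  rw [mulVecLin_apply] at hw
  set u := w ᵥ* x with hu
  have huu : u ⬝ᵥ u = w ⬝ᵥ y := by rw [hu, ← dotProduct_mul_transpose_mulVec, hw]
  refine ⟨u, by rw [hu, ← mulVec_transpose, mulVec_mulVec, hw], ?_⟩
  rcases (dotProduct_self_nonneg u).eq_or_lt with hu0 | hu0
  · rw [← hu0, mul_zero]
    exact dotProduct_self_nonneg y
  · refine le_of_mul_le_mul_left ?_ hu0
    calc (u ⬝ᵥ u) * (c * (u ⬝ᵥ u)) = c * (w ⬝ᵥ y) ^ 2 := by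
          rw [huu]
          ring
      _ ≤ c * ((w ⬝ᵥ w) * (y ⬝ᵥ y)) := by
          gcongr
          exact dotProduct_sq_le w y
      _ = c * (w ⬝ᵥ w) * (y ⬝ᵥ y) := by ring
      _ ≤ (u ⬝ᵥ u) * (y ⬝ᵥ y) := mul_le_mul_of_nonneg_right (hx w) (dotProduct_self_nonneg y)

theorem enorm2_sub_le_of_isMinInterp {n p : ℕ} {x : Matrix (Fin n) (Fin p) ℝ} {c : ℝ} (hc : 0 < c)
    (hx : ∀ v, c * (v ⬝ᵥ v) ≤ (v ᵥ* x) ⬝ᵥ (v ᵥ* x)) {y : Fin n → ℝ} {β b : Fin p → ℝ}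
    (hb : IsMinInterp x (fun i => (∑ j, x i j * β j) + y i) b) :
    enorm2 (b - β) ≤ 2 * enorm2 β + enorm2 y / √c := by
  obtain ⟨u, hxu, hu⟩ := exists_mulVec_eq_of_coercive hc hx y
  have hbu : enorm2 b ≤ enorm2 (β + u) := hb.2 _ fun i => by
    simp only [← hxu, mulVec, dotProduct, Pi.add_apply, mul_add, Finset.sum_add_distrib]
  have hu_le : enorm2 u ≤ enorm2 y / √c := by
    rw [le_div_iff₀ (Real.sqrt_pos.2 hc)]
    refine le_of_sq_le_sq ?_ (enorm2_nonneg y)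
    rw [mul_pow, Real.sq_sqrt hc.le, enorm2_sq, enorm2_sq]
    linarith
  linarith [enorm2_add_le β u, enorm2_sub_le b β]

theorem mulVec_sub_eq_of_isMinInterp {n p : ℕ} {x : Matrix (Fin n) (Fin p) ℝ} {y : Fin n → ℝ}
    {β b : Fin p → ℝ} (hb : IsMinInterp x (fun i => (∑ j, x i j * β j) + y i) b) :
    x *ᵥ (b - β) = y := by
  ext i
  have hfit := hb.1 i
  simp only [mulVec, dotProduct, Pi.sub_apply, mul_sub, Finset.sum_sub_distrib]
  linarith

theorem dotProduct_mulVec_sq_le {a : κ → ℝ} (ha : ∀ j, 0 < a j) (z : Matrix ι κ ℝ) (v : ι → ℝ)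
    (e : κ → ℝ) :
    (v ⬝ᵥ z *ᵥ e) ^ 2 ≤ weightedForm a z v * ∑ j, (a j)⁻¹ * e j ^ 2 := by
  rw [dotProduct_mulVec]
  refine Finset.sum_sq_le_sum_mul_sum_of_sq_le_mul _
    (fun j _ => mul_nonneg (ha j).le (sq_nonneg _))
    (fun j _ => mul_nonneg (inv_nonneg.2 (ha j).le) (sq_nonneg _)) fun j _ => le_of_eq ?_
  have := (ha j).ne'
  field_simp

theorem dotProduct_self_mulVec_le {a : κ → ℝ} (ha : ∀ j, 0 < a j) {z : Matrix ι κ ℝ} {e : κ → ℝ}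
    {C D : ℝ} (hform : weightedForm a z (z *ᵥ e) ≤ C * (z *ᵥ e ⬝ᵥ z *ᵥ e)) (hC : 0 ≤ C)
    (he : ∑ j, (a j)⁻¹ * e j ^ 2 ≤ D) : z *ᵥ e ⬝ᵥ z *ᵥ e ≤ C * D := by
  have he0 : 0 ≤ ∑ j, (a j)⁻¹ * e j ^ 2 :=
    Finset.sum_nonneg fun j _ => mul_nonneg (inv_nonneg.2 (ha j).le) (sq_nonneg _)
  set y := z *ᵥ e
  have hsq : (y ⬝ᵥ y) ^ 2 ≤ C * (y ⬝ᵥ y) * D :=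
    (dotProduct_mulVec_sq_le ha z y e).trans
      (mul_le_mul hform he he0 (mul_nonneg hC (dotProduct_self_nonneg y)))
  rcases (dotProduct_self_nonneg y).eq_or_lt with hy | hy
  · rw [← hy]
    exact mul_nonneg hC (he0.trans he)
  · refine le_of_mul_le_mul_left ?_ hy
    linarith

end Interpolation

section Spectrum

variable {p : ℕ} {lam : ℕ → ℝ} {Porth Sig : Matrix (Fin p) (Fin p) ℝ}

theorem dotProduct_self_vecMul_of_mul_transpose_eq_one (hP : Porth * Porthᵀ = 1) (w : Fin p → ℝ) :
    (w ᵥ* Porth) ⬝ᵥ (w ᵥ* Porth) = w ⬝ᵥ w := by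
  rw [← dotProduct_mul_transpose_mulVec, hP, one_mulVec]

theorem predNorm_sq (hlam : ∀ j : Fin p, 0 ≤ lam (j + 1))
    (hSig : Sig = Porth * Matrix.diagonal (fun i : Fin p => lam ((i : ℕ) + 1)) * Porthᵀ)
    (d : Fin p → ℝ) : predNorm Sig d ^ 2 = ∑ j : Fin p, lam (j + 1) * (d ᵥ* Porth) j ^ 2 := by
  have hquad : d ⬝ᵥ Sig *ᵥ d = ∑ j : Fin p, lam (j + 1) * (d ᵥ* Porth) j ^ 2 := by
    rw [hSig, ← mulVec_mulVec, ← mulVec_mulVec, dotProduct_mulVec, mulVec_transpose]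
    simp only [dotProduct, mulVec_diagonal]
    exact Finset.sum_congr rfl fun j _ => by ring
  rw [predNorm, hquad, Real.sq_sqrt]
  exact Finset.sum_nonneg fun j _ => mul_nonneg (hlam j) (sq_nonneg _)

/-- The indicator of the indices `k, …, p` in the statement's `1`-based numbering of the
eigenvalues; as weights of a `weightedForm` it selects the spectral tail `rsum p lam k`. -/
def tailWeight (p k : ℕ) (j : Fin p) : ℝ := if k ≤ (j : ℕ) + 1 then 1 else 0

theorem tailWeight_nonneg (k : ℕ) (j : Fin p) : 0 ≤ tailWeight p k j := by
  unfold tailWeight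
  split_ifs <;> norm_num

theorem tailWeight_le_one (k : ℕ) (j : Fin p) : tailWeight p k j ≤ 1 := by
  unfold tailWeight
  split_ifs <;> norm_num

theorem tailWeight_mul_le {k : ℕ} (hk : 0 ≤ lam k) (hanti : ∀ j, k ≤ j → j ≤ p → lam j ≤ lam k)
    (j : Fin p) : tailWeight p k j * lam (j + 1) ≤ lam k := by
  unfold tailWeight
  split_ifs with hj
  · rw [one_mul]
    exact hanti _ hj (by omega)
  · rwa [zero_mul]

theorem sum_tailWeight_mul {k : ℕ} (hk : 1 ≤ k) :
    ∑ j : Fin p, tailWeight p k j * lam (j + 1) = rsum p lam k := by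
  have htail : (Finset.Ico (0 + 1) (p + 1)).filter (k ≤ ·) = Finset.Icc k p := by
    ext i
    simp only [Finset.mem_filter, Finset.mem_Ico, Finset.mem_Icc]
    omega
  simp only [tailWeight, ite_mul, one_mul, zero_mul]
  rw [Fin.sum_univ_eq_sum_range (fun j => if k ≤ j + 1 then lam (j + 1) else 0) p,
    Finset.range_eq_Ico, Finset.sum_Ico_add' (fun i => if k ≤ i then lam i else 0),
    ← Finset.sum_filter, htail, rsum]

theorem measure_not_coercive_le {n k : ℕ} (hlam : ∀ j : Fin p, 0 ≤ lam (j + 1))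
    (hP : Porth * Porthᵀ = 1) (hk : 1 ≤ k) (hlamk : 0 < lam k)
    (hanti : ∀ j, k ≤ j → j ≤ p → lam j ≤ lam k) (hR : 80 * n * lam k ≤ rsum p lam k) :
    (Measure.pi fun _ : Fin n => mvGaussian p lam Porth)
        {x | ¬ ∀ v, 4 / 25 * rsum p lam k * (v ⬝ᵥ v) ≤
          (v ᵥ* Matrix.of x) ⬝ᵥ (v ᵥ* Matrix.of x)} ≤ 2 * ENNReal.ofReal (Real.exp (-n)) := by
  have hsum := sum_tailWeight_mul (p := p) (lam := lam) hk
  refine le_trans (measure_mono fun x hx => Set.mem_ofPred.2 fun hform => hx fun v => ?_)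
    (measure_not_le_weightedForm hlam (mul_eq_one_comm.1 hP) (tailWeight_nonneg k) hlamk
      (tailWeight_mul_le hlamk.le hanti) (hsum ▸ hR))
  calc _ ≤ weightedForm (tailWeight p k) (Matrix.of x * Porth) v := by
        simpa only [hsum, enorm2_sq] using hform v
    _ ≤ ∑ j, 1 * (v ᵥ* (Matrix.of x * Porth)) j ^ 2 := by
        unfold weightedForm
        gcongr with j
        exact tailWeight_le_one k j
    _ = _ := by
        rw [← dotProduct_self_vecMul_of_mul_transpose_eq_one hP, vecMul_vecMul]
        simp only [one_mul, dotProduct, sq]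

end Spectrum

section NoiseScale

theorem exists_pos_isGreatest_sum_min_le {κ : Type*} [Fintype κ] (w : κ → ℝ) {b T : ℝ} (hb : 0 < b)
    (hT : 0 < T) :
    ∃ t, 0 < t ∧ IsGreatest (Set.Icc 0 T ∩ {t | ∑ j, min (w j) (t ^ 2) ≤ b}) t := by
  set t₀ := min T √(b / (Fintype.card κ + 1))
  have ht₀_pos : 0 < t₀ := lt_min hT (Real.sqrt_pos.2 (by positivity))
  have ht₀_sum : ∑ j, min (w j) (t₀ ^ 2) ≤ b := by
    calc ∑ j, min (w j) (t₀ ^ 2) ≤ ∑ _j : κ, b / (Fintype.card κ + 1) := by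
          refine Finset.sum_le_sum fun j _ => (min_le_right _ _).trans ?_
          calc t₀ ^ 2 ≤ √(b / (Fintype.card κ + 1)) ^ 2 := by
                gcongr
                exact min_le_right _ _
            _ = b / (Fintype.card κ + 1) := Real.sq_sqrt (by positivity)
      _ = Fintype.card κ * (b / (Fintype.card κ + 1)) := by
          rw [Finset.sum_const, nsmul_eq_mul, Finset.card_univ]
      _ ≤ b := by
          rw [mul_div_assoc', div_le_iff₀ (by positivity)]
          linarith
  have hcompact : IsCompact (Set.Icc 0 T ∩ {t | ∑ j, min (w j) (t ^ 2) ≤ b}) :=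
    isCompact_Icc.inter_right (isClosed_le (by fun_prop) continuous_const)
  have hmem : t₀ ∈ Set.Icc 0 T ∩ {t | ∑ j, min (w j) (t ^ 2) ≤ b} :=
    ⟨⟨ht₀_pos.le, min_le_left _ _⟩, ht₀_sum⟩
  obtain ⟨t, ht⟩ := hcompact.exists_isGreatest ⟨t₀, hmem⟩
  exact ⟨t, ht₀_pos.trans_le (ht.2 hmem), ht⟩

variable {n p : ℕ} {lam : ℕ → ℝ} {Porth Sig : Matrix (Fin p) (Fin p) ℝ} {c0 ρ t α : ℝ}
  {β : Fin p → ℝ}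

theorem pos_of_mem_kstarSet (hn : 0 < n) (hlam : ∀ j : Fin p, 0 ≤ lam (j + 1)) (hc0 : 0 < c0)
    {k : ℕ} (hk : k ∈ kstarSet p lam c0 n) : 0 < lam k := by
  obtain ⟨hk1, hkp, hkR⟩ := hk
  have hlamk : 0 ≤ lam k := by
    simpa only [Nat.sub_add_cancel hk1] using hlam ⟨k - 1, by omega⟩
  refine hlamk.lt_of_ne' fun h0 => hkR.not_gt ?_
  rw [h0, div_zero]
  exact mul_pos hc0 (by exact_mod_cast hn)

theorem rho_pos (hR : 0 < rsum p lam (kstar p lam c0 n)) (hα : 0 < α) :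
    0 < rho p lam c0 n β α :=
  add_pos_of_nonneg_of_pos (enorm2_nonneg β) (div_pos (by positivity) (Real.sqrt_pos.2 hR))

theorem rho_mono (c0 : ℝ) (n : ℕ) (β : Fin p → ℝ) : Monotone (rho p lam c0 n β) := by
  intro z z' hz
  unfold rho
  gcongr

theorem sum_min_le_of_lt_rbar {γ z r : ℝ} (hr : 0 ≤ r) (h : r < rbar p lam γ ρ z) :
    ∑ i : Fin p, min (lam (i + 1) * ρ ^ 2) (r ^ 2) ≤ γ * z ^ 2 := by
  have hne : {s : ℝ | 0 < s ∧
      ∑ i : Fin p, min (lam ((i : ℕ) + 1) * ρ ^ 2) (s ^ 2) ≤ γ * z ^ 2}.Nonempty := by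
    by_contra hempty
    rw [rbar, Set.not_nonempty_iff_eq_empty.1 hempty, Real.sSup_empty] at h
    linarith
  obtain ⟨s, ⟨_, hs⟩, hrs⟩ := exists_lt_of_lt_csSup hne h
  refine le_trans (Finset.sum_le_sum fun i _ => ?_) hs
  gcongr

/-- The radii `t ≤ α / (40 √n)` that satisfy the constraint of `rbar p lam (1 / 400) ρ (2 * α)`:
those relevant for noise of norm between `α` and `2 * α`. -/
def admissibleRadii (n p : ℕ) (lam : ℕ → ℝ) (ρ α : ℝ) : Set ℝ :=
  Set.Icc 0 (α / (40 * √n)) ∩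
    {t | ∑ j : Fin p, min (lam (j + 1) * ρ ^ 2) (t ^ 2) ≤ 1 / 400 * (2 * α) ^ 2}

theorem mem_admissibleRadii_of_lt_min (hn : 0 < n) (hlam : ∀ j : Fin p, 0 ≤ lam (j + 1))
    {z r : ℝ} (hz : 0 ≤ z) (hzα : z ≤ 2 * α) (hρ : 0 ≤ ρ) {ρ' : ℝ} (hρ' : ρ ≤ ρ') (hr : 0 ≤ r)
    (hlt : r < min (rbar p lam (1 / 400) ρ' z) (1 / 80 * z / √n)) :
    r ∈ admissibleRadii n p lam ρ α := by
  obtain ⟨hrbar, hnoise⟩ := lt_min_iff.1 hlt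
  have hsqrt : 0 < √(n : ℝ) := Real.sqrt_pos.2 (by exact_mod_cast hn)
  refine ⟨⟨hr, hnoise.le.trans ?_⟩, ?_⟩
  · rw [div_le_div_iff₀ hsqrt (by positivity)]
    nlinarith
  · calc ∑ j : Fin p, min (lam (j + 1) * ρ ^ 2) (r ^ 2)
        ≤ ∑ j : Fin p, min (lam (j + 1) * ρ' ^ 2) (r ^ 2) := by
          gcongr with j
          exact hlam j
      _ ≤ 1 / 400 * z ^ 2 := sum_min_le_of_lt_rbar hr hrbar
      _ ≤ 1 / 400 * (2 * α) ^ 2 := by gcongr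

/-- The squared semi-axes, along the eigenvectors of the covariance, of the ellipsoid
`{d | ‖d‖² / ρ² + ‖Σ^{1/2} d‖² / t² ≤ 1}`. -/
def ellipsoidWeight (lam : ℕ → ℝ) (ρ t : ℝ) (j : Fin p) : ℝ :=
  ((ρ ^ 2)⁻¹ + lam (j + 1) * (t ^ 2)⁻¹)⁻¹

theorem ellipsoidWeight_pos (hlam : ∀ j : Fin p, 0 ≤ lam (j + 1)) (hρ : 0 < ρ) (t : ℝ) (j : Fin p) :
    0 < ellipsoidWeight lam ρ t j := by
  have := hlam j
  unfold ellipsoidWeight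
  positivity

theorem ellipsoidWeight_mul_le_min (hlam : ∀ j : Fin p, 0 ≤ lam (j + 1)) (hρ : 0 < ρ) (ht : 0 < t)
    (j : Fin p) :
    ellipsoidWeight lam ρ t j * lam (j + 1) ≤ min (lam (j + 1) * ρ ^ 2) (t ^ 2) := by
  have hj := hlam j
  rw [ellipsoidWeight, inv_mul_eq_div]
  refine le_min ?_ ?_ <;> rw [div_le_iff₀ (by positivity), mul_add]
  · refine le_add_of_le_of_nonneg (le_of_eq ?_) (by positivity)
    field_simp
  · refine le_add_of_nonneg_of_le (by positivity) (le_of_eq ?_)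
    field_simp

theorem sum_inv_ellipsoidWeight_mul_sq (hlam : ∀ j : Fin p, 0 ≤ lam (j + 1))
    (hP : Porth * Porthᵀ = 1)
    (hSig : Sig = Porth * Matrix.diagonal (fun i : Fin p => lam ((i : ℕ) + 1)) * Porthᵀ)
    (ρ t : ℝ) (d : Fin p → ℝ) :
    ∑ j, (ellipsoidWeight lam ρ t j)⁻¹ * (d ᵥ* Porth) j ^ 2 =
      enorm2 d ^ 2 / ρ ^ 2 + predNorm Sig d ^ 2 / t ^ 2 := by
  rw [predNorm_sq hlam hSig, enorm2_sq, ← dotProduct_self_vecMul_of_mul_transpose_eq_one hP,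
    dotProduct, Finset.sum_div, Finset.sum_div, ← Finset.sum_add_distrib]
  refine Finset.sum_congr rfl fun j _ => ?_
  rw [ellipsoidWeight, inv_inv]
  ring

theorem sum_inv_ellipsoidWeight_mul_sq_le (hlam : ∀ j : Fin p, 0 ≤ lam (j + 1))
    (hP : Porth * Porthᵀ = 1)
    (hSig : Sig = Porth * Matrix.diagonal (fun i : Fin p => lam ((i : ℕ) + 1)) * Porthᵀ)
    (hρ : 0 < ρ) (ht : 0 < t) {d : Fin p → ℝ} (hd : enorm2 d ≤ 4 * ρ)
    (hpred : predNorm Sig d ≤ t) :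
    ∑ j, (ellipsoidWeight lam ρ t j)⁻¹ * (d ᵥ* Porth) j ^ 2 ≤ 17 := by
  rw [sum_inv_ellipsoidWeight_mul_sq hlam hP hSig]
  have hnorm : enorm2 d ^ 2 / ρ ^ 2 ≤ 16 := by
    rw [div_le_iff₀ (by positivity)]
    calc enorm2 d ^ 2 ≤ (4 * ρ) ^ 2 := pow_le_pow_left₀ (enorm2_nonneg d) hd 2
      _ = 16 * ρ ^ 2 := by ring
  have hpred_sq : predNorm Sig d ^ 2 / t ^ 2 ≤ 1 := by
    rw [div_le_one (by positivity)]
    exact pow_le_pow_left₀ (Real.sqrt_nonneg _) hpred 2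
  linarith

theorem sum_ellipsoidWeight_mul_add_le (hn : 0 < n) (hlam : ∀ j : Fin p, 0 ≤ lam (j + 1))
    (hρ : 0 < ρ) (ht : 0 < t) (htα : t ∈ admissibleRadii n p lam ρ α) :
    2 * ∑ j : Fin p, ellipsoidWeight lam ρ t j * lam (j + 1) + 20 * n * t ^ 2 ≤
      13 / 400 * α ^ 2 := by
  have hn' : (0 : ℝ) < n := by exact_mod_cast hn
  have hsum : ∑ j : Fin p, ellipsoidWeight lam ρ t j * lam (j + 1) ≤ 1 / 400 * (2 * α) ^ 2 :=
    (Finset.sum_le_sum fun j _ => ellipsoidWeight_mul_le_min hlam hρ ht j).trans htα.2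
  have hradius : 20 * n * t ^ 2 ≤ 5 / 400 * α ^ 2 := by
    calc 20 * n * t ^ 2 ≤ 20 * n * (α / (40 * √n)) ^ 2 := by
          gcongr
          exact htα.1.2
      _ = 5 / 400 * α ^ 2 := by
          rw [div_pow, mul_pow, Real.sq_sqrt hn'.le]
          field_simp
          ring
  linarith

theorem enorm2_sub_le_four_mul_rho (hR : 0 < rsum p lam (kstar p lam c0 n))
    {x : Matrix (Fin n) (Fin p) ℝ}
    (hx : ∀ v, 4 / 25 * rsum p lam (kstar p lam c0 n) * (v ⬝ᵥ v) ≤ (v ᵥ* x) ⬝ᵥ (v ᵥ* x))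
    {y : Fin n → ℝ} {b : Fin p → ℝ} (hb : IsMinInterp x (fun i => (∑ j, x i j * β j) + y i) b)
    (hy : enorm2 y ≤ 2 * α) : enorm2 (b - β) ≤ 4 * rho p lam c0 n β α := by
  set R := rsum p lam (kstar p lam c0 n)
  have hsqrt : √(4 / 25 * R) = 2 / 5 * √R := by
    rw [Real.sqrt_mul (by norm_num), show (4 / 25 : ℝ) = (2 / 5) ^ 2 by norm_num,
      Real.sqrt_sq (by norm_num)]
  have hα : 0 ≤ α := by linarith [enorm2_nonneg y]
  have hβ := enorm2_nonneg β
  calc enorm2 (b - β) ≤ 2 * enorm2 β + enorm2 y / √(4 / 25 * R) :=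
        enorm2_sub_le_of_isMinInterp (by positivity) hx hb
    _ ≤ 4 * enorm2 β + 16 * α / √R := by
        rw [hsqrt]
        refine add_le_add (by linarith) ?_
        rw [div_le_div_iff₀ (by positivity) (by positivity)]
        nlinarith [Real.sqrt_pos.2 hR]
    _ = 4 * rho p lam c0 n β α := by
        rw [rho]
        ring

/-- The designs for which the lower bound fails at some noise vector of norm between `α` and
`2 * α`. Quantifying over the noise makes this an event on the design alone, hence independent
of the actual noise. -/
def failureEvent (n : ℕ) (lam : ℕ → ℝ) (Sig : Matrix (Fin p) (Fin p) ℝ) (c0 : ℝ) (β : Fin p → ℝ)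
    (α : ℝ) : Set (Fin n → Fin p → ℝ) :=
  {x | ∃ y b, IsMinInterp x (fun i => (∑ j, x i j * β j) + y i) b ∧
    α ≤ enorm2 y ∧ enorm2 y ≤ 2 * α ∧
    predNorm Sig (b - β) < min (rbar p lam (1 / 400) (rho p lam c0 n β (enorm2 y)) (enorm2 y))
      (1 / 80 * enorm2 y / √n)}

theorem failureEvent_subset (hn : 0 < n) (hlam : ∀ j : Fin p, 0 ≤ lam (j + 1))
    (hP : Porth * Porthᵀ = 1)
    (hSig : Sig = Porth * Matrix.diagonal (fun i : Fin p => lam ((i : ℕ) + 1)) * Porthᵀ)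
    (hR : 0 < rsum p lam (kstar p lam c0 n)) (hα : 0 < α) (ht : 0 < t)
    (htmax : IsGreatest (admissibleRadii n p lam (rho p lam c0 n β α) α) t) :
    failureEvent n lam Sig c0 β α ⊆
      {x | ¬ ∀ v, 4 / 25 * rsum p lam (kstar p lam c0 n) * (v ⬝ᵥ v) ≤
          (v ᵥ* Matrix.of x) ⬝ᵥ (v ᵥ* Matrix.of x)} ∪
      {x | ¬ ∀ v, weightedForm (ellipsoidWeight lam (rho p lam c0 n β α) t)
          (Matrix.of x * Porth) v ≤ 256 / 225 * (2 * ∑ j : Fin p,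
            ellipsoidWeight lam (rho p lam c0 n β α) t j * lam (j + 1) + 20 * n * t ^ 2) *
            enorm2 v ^ 2} := by
  rintro x ⟨y, b, hb, hαy, hyα, hlt⟩
  rw [Set.mem_union, Set.mem_ofPred, Set.mem_ofPred, ← not_and_or]
  rintro ⟨hcoer, hform⟩
  set ρ := rho p lam c0 n β α
  have hρ : 0 < ρ := rho_pos hR hα
  have hpred : predNorm Sig (b - β) ≤ t :=
    htmax.2 (mem_admissibleRadii_of_lt_min hn hlam (enorm2_nonneg y) hyα hρ.le
      (rho_mono c0 n β hαy) (Real.sqrt_nonneg _) hlt)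
  have hellipsoid := sum_inv_ellipsoidWeight_mul_sq_le hlam hP hSig hρ ht
    (enorm2_sub_le_four_mul_rho hR hcoer hb hyα) hpred
  have hnoise : (Matrix.of x * Porth) *ᵥ ((b - β) ᵥ* Porth) = y := by
    rw [← mulVec_transpose, mulVec_mulVec, Matrix.mul_assoc, hP, Matrix.mul_one]
    exact mulVec_sub_eq_of_isMinInterp hb
  have hconst := sum_ellipsoidWeight_mul_add_le hn hlam hρ ht htmax.1
  have hball : enorm2 y ^ 2 ≤ 256 / 225 * (13 / 400 * α ^ 2) * 17 := by
    rw [enorm2_sq, ← hnoise]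
    refine dotProduct_self_mulVec_le (ellipsoidWeight_pos hlam hρ t) ?_ (by positivity) hellipsoid
    rw [hnoise, ← enorm2_sq]
    exact (hform y).trans (by gcongr)
  have hαy_sq : α ^ 2 ≤ enorm2 y ^ 2 := pow_le_pow_left₀ hα.le hαy 2
  linarith [pow_pos hα 2]

theorem measure_failureEvent_le (hn : 0 < n) (hlam : ∀ j : Fin p, 0 ≤ lam (j + 1))
    (hanti : ∀ j k, 1 ≤ j → j ≤ k → k ≤ p → lam k ≤ lam j) (hP : Porth * Porthᵀ = 1)
    (hSig : Sig = Porth * Matrix.diagonal (fun i : Fin p => lam ((i : ℕ) + 1)) * Porthᵀ)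
    (hc0 : 80 ≤ c0) (hne : (kstarSet p lam c0 n).Nonempty) (β : Fin p → ℝ) (hα : 0 < α) :
    (Measure.pi fun _ : Fin n => mvGaussian p lam Porth) (failureEvent n lam Sig c0 β α) ≤
      3 * ENNReal.ofReal (Real.exp (-n)) := by
  obtain ⟨hk1, _, hkR⟩ : kstar p lam c0 n ∈ kstarSet p lam c0 n := Nat.sInf_mem hne
  have hlamk := pos_of_mem_kstarSet hn hlam (by linarith) (Nat.sInf_mem hne)
  have hR : 80 * n * lam (kstar p lam c0 n) ≤ rsum p lam (kstar p lam c0 n) :=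
    (le_div_iff₀ hlamk).1 (le_trans (by gcongr) hkR)
  have hRpos : 0 < rsum p lam (kstar p lam c0 n) := lt_of_lt_of_le (by positivity) hR
  have hρ : 0 < rho p lam c0 n β α := rho_pos hRpos hα
  obtain ⟨t, ht, htmax⟩ := exists_pos_isGreatest_sum_min_le
    (fun j : Fin p => lam (j + 1) * rho p lam c0 n β α ^ 2) (b := 1 / 400 * (2 * α) ^ 2)
    (T := α / (40 * √n)) (by positivity) (by positivity)
  calc _ ≤ 2 * ENNReal.ofReal (Real.exp (-n)) + ENNReal.ofReal (Real.exp (-n)) :=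
        (measure_mono (failureEvent_subset hn hlam hP hSig hRpos hα ht htmax)).trans
          ((measure_union_le _ _).trans (add_le_add
            (measure_not_coercive_le hlam hP hk1 hlamk (fun j => hanti _ j hk1) hR)
            (measure_not_weightedForm_le hlam (mul_eq_one_comm.1 hP)
              (fun j => (ellipsoidWeight_pos hlam hρ t j).le) (pow_pos ht 2)
              fun j => (ellipsoidWeight_mul_le_min hlam hρ ht j).trans (min_le_right _ _))))
    _ = 3 * ENNReal.ofReal (Real.exp (-n)) := by ring

end NoiseScale

section Independence

variable {Ω α : Type*} [MeasurableSpace Ω] [MeasurableSpace α] {P : Measure Ω}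
  [IsProbabilityMeasure P] {X : Ω → α} {K : Ω → ℕ} {ε : ℝ≥0∞}

theorem measure_biUnion_toMeasurable_inter {ι : Type*} [Countable ι] (s : ι → Set Ω) (I : Set ι)
    {B : Set Ω} (hB : MeasurableSet B) :
    P ((⋃ i ∈ I, toMeasurable P (s i)) ∩ B) = P ((⋃ i ∈ I, s i) ∩ B) :=
  (Measure.measure_inter_eq_of_measure_eq hB (measure_biUnion_toMeasurable I.to_countable s).symm
    (Set.iUnion₂_mono fun i _ => subset_toMeasurable P (s i)) (measure_ne_top _ _)).symm

theorem measure_biUnion_toMeasurable_inter_eq_mul (hX : Measurable X) (hXK : IndepFun X K P)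
    (I : Set ℕ) {A : Set α} (hA : MeasurableSet A) :
    P ((⋃ i ∈ I, toMeasurable P (K ⁻¹' {i})) ∩ X ⁻¹' A) =
      P (⋃ i ∈ I, toMeasurable P (K ⁻¹' {i})) * P (X ⁻¹' A) := by
  have hI : ⋃ i ∈ I, K ⁻¹' {i} = K ⁻¹' I := by
    ext ω
    simp
  rw [measure_biUnion_toMeasurable_inter _ _ (hX hA), measure_biUnion_toMeasurable I.to_countable,
    hI, Set.inter_comm, hXK.measure_inter_preimage_eq_mul _ _ hA .of_discrete, mul_comm]

theorem measure_disjointed_toMeasurable_inter_eq_mul (hX : Measurable X) (hXK : IndepFun X K P)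
    (k : ℕ) {A : Set α} (hA : MeasurableSet A) :
    P (disjointed (fun i => toMeasurable P (K ⁻¹' {i})) k ∩ X ⁻¹' A) =
      P (disjointed (fun i => toMeasurable P (K ⁻¹' {i})) k) * P (X ⁻¹' A) := by
  let T (i : ℕ) : Set Ω := toMeasurable P (K ⁻¹' {i})
  let H (I : Set ℕ) : Set Ω := ⋃ i ∈ I, T i
  have hH (I : Set ℕ) : MeasurableSet (H I) :=
    .biUnion I.to_countable fun i _ => measurableSet_toMeasurable _ _
  have hmono : H (Set.Iio k) ⊆ H (Set.Iic k) := Set.biUnion_mono Set.Iio_subset_Iic_self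
    fun _ _ => subset_rfl
  have hdiff : disjointed T k = H (Set.Iic k) \ H (Set.Iio k) := by
    rw [disjointed_apply, Finset.sup_set_eq_biUnion]
    simp only [H, ← Set.Iio_insert, Set.biUnion_insert, Set.union_sdiff_right, Finset.mem_Iio,
      Set.mem_Iio]
  change P (disjointed T k ∩ _) = P (disjointed T k) * _
  rw [hdiff, Set.inter_sdiff_distrib_right, measure_sdiff (Set.inter_subset_inter_left _ hmono)
      ((hH _).inter (hX hA)).nullMeasurableSet (measure_ne_top _ _),
    measure_sdiff hmono (hH _).nullMeasurableSet (measure_ne_top _ _),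
    ENNReal.sub_mul fun _ _ => measure_ne_top _ _,
    measure_biUnion_toMeasurable_inter_eq_mul hX hXK _ hA,
    measure_biUnion_toMeasurable_inter_eq_mul hX hXK _ hA]

-- The level sets of a possibly non-measurable `K` are replaced by measurable hulls made disjoint.
theorem measure_le_of_inter_preimage_subset (hX : Measurable X) (hXK : IndepFun X K P)
    {A : ℕ → Set α} (hA : ∀ k, MeasurableSet (A k)) (hAε : ∀ k, P (X ⁻¹' A k) ≤ ε)
    {E : Set Ω} (hE : MeasurableSet E) (hEA : ∀ k, E ∩ K ⁻¹' {k} ⊆ X ⁻¹' A k) : P E ≤ ε := by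
  let T (i : ℕ) : Set Ω := toMeasurable P (K ⁻¹' {i})
  have hT (i : ℕ) : MeasurableSet (T i) := measurableSet_toMeasurable _ _
  have hcover : ⋃ k, disjointed T k = Set.univ := by
    rw [iUnion_disjointed, Set.eq_univ_iff_forall]
    exact fun ω => Set.mem_iUnion.2 ⟨K ω, subset_toMeasurable _ _ rfl⟩
  have hnull (k : ℕ) : P (T k ∩ (E \ X ⁻¹' A k)) = 0 := by
    rw [Measure.measure_toMeasurable_inter (hE.diff (hX (hA k))) (measure_ne_top _ _)]
    convert measure_empty (μ := P)
    exact Set.eq_empty_of_forall_notMem fun ω hω => hω.2.2 (hEA k ⟨hω.2.1, hω.1⟩)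
  have hpiece (k : ℕ) : P (E ∩ disjointed T k) ≤ P (disjointed T k) * ε := by
    calc P (E ∩ disjointed T k)
        ≤ P (disjointed T k ∩ X ⁻¹' A k ∪ T k ∩ (E \ X ⁻¹' A k)) := by
          refine measure_mono fun ω hω => ?_
          by_cases hωA : ω ∈ X ⁻¹' A k
          · exact .inl ⟨hω.2, hωA⟩
          · exact .inr ⟨disjointed_subset _ _ hω.2, hω.1, hωA⟩
      _ ≤ P (disjointed T k ∩ X ⁻¹' A k) + 0 := by
          rw [← hnull k]
          exact measure_union_le _ _
      _ ≤ _ := by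
          rw [add_zero, measure_disjointed_toMeasurable_inter_eq_mul hX hXK k (hA k)]
          gcongr
          exact hAε k
  calc P E = P (⋃ k, E ∩ disjointed T k) := by rw [← Set.inter_iUnion, hcover, Set.inter_univ]
    _ ≤ ∑' k, P (disjointed T k) * ε := (measure_iUnion_le _).trans (ENNReal.tsum_le_tsum hpiece)
    _ = ε := by
        rw [ENNReal.tsum_mul_right, ← measure_iUnion (disjoint_disjointed T)
          fun k => .disjointed hT k, hcover, measure_univ, one_mul]

theorem one_sub_le_measure_notMem (hX : AEMeasurable X P) (hXK : IndepFun X K P)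
    {A : ℕ → Set α} (hA : ∀ k, P.map X (A k) ≤ ε) : 1 - ε ≤ P {ω | X ω ∉ A (K ω)} := by
  let S : Set Ω := {ω | hX.mk X ω ∉ A (K ω)}
  let A' (k : ℕ) : Set α := toMeasurable (P.map X) (A k)
  have hA' (k : ℕ) : MeasurableSet (A' k) := measurableSet_toMeasurable _ _
  have hbound : P (toMeasurable P S)ᶜ ≤ ε := by
    refine measure_le_of_inter_preimage_subset hX.measurable_mk
      (hXK.congr hX.ae_eq_mk .rfl) hA' (fun k => ?_) (measurableSet_toMeasurable _ _).compl ?_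
    · rw [← Measure.map_apply hX.measurable_mk (hA' k), ← Measure.map_congr hX.ae_eq_mk,
        measure_toMeasurable]
      exact hA k
    · rintro k ω ⟨hωS, rfl⟩
      exact subset_toMeasurable _ _ (not_not.1 fun hωA => hωS (subset_toMeasurable _ _ hωA))
  calc 1 - ε ≤ P S := by
        rw [tsub_le_iff_right, ← measure_toMeasurable S,
          ← prob_add_prob_compl (μ := P) (measurableSet_toMeasurable P S)]
        gcongr
    _ ≤ P {ω | X ω ∉ A (K ω)} := by
        refine measure_mono_ae ?_
        filter_upwards [hX.ae_eq_mk] with ω hω hωS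
        change X ω ∉ A (K ω)
        rwa [hω]

end Independence

section LowerBound

theorem measurable_enorm2 {k : ℕ} : Measurable (enorm2 : (Fin k → ℝ) → ℝ) := by
  unfold enorm2
  fun_prop

theorem zpow_floor_logb_le {z : ℝ} (hz : 0 < z) : (2 : ℝ) ^ ⌊Real.logb 2 z⌋ ≤ z := by
  rw [← Real.rpow_intCast, ← Real.le_logb_iff_rpow_le one_lt_two hz]
  exact Int.floor_le _

theorem le_two_mul_zpow_floor_logb {z : ℝ} (hz : 0 < z) : z ≤ 2 * (2 : ℝ) ^ ⌊Real.logb 2 z⌋ := by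
  rw [mul_comm, ← zpow_add_one₀ two_ne_zero, ← Real.rpow_intCast,
    ← Real.logb_le_iff_le_rpow one_lt_two hz]
  push_cast
  exact (Int.lt_floor_add_one _).le

theorem min_le_predNorm_of_notMem_failureEvent {n p : ℕ} {lam : ℕ → ℝ}
    {Sig : Matrix (Fin p) (Fin p) ℝ} {c0 : ℝ} {β b : Fin p → ℝ} {x : Fin n → Fin p → ℝ}
    {y : Fin n → ℝ} (hb : IsMinInterp x (fun i => (∑ j, x i j * β j) + y i) b)
    (hx : x ∉ failureEvent n lam Sig c0 β ((2 : ℝ) ^ ⌊Real.logb 2 (enorm2 y)⌋)) :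
    min (rbar p lam (1 / 400) (rho p lam c0 n β (enorm2 y)) (enorm2 y)) (1 / 80 * enorm2 y / √n) ≤
      predNorm Sig (b - β) := by
  rcases (enorm2_nonneg y).eq_or_lt with hy | hy
  · refine (min_le_right _ _).trans ?_
    rw [← hy, mul_zero, zero_div]
    exact Real.sqrt_nonneg _
  · by_contra! hlt
    exact hx ⟨y, b, hb, zpow_floor_logb_le hy, le_two_mul_zpow_floor_logb hy, hlt⟩

theorem stmt1_general {n p : ℕ} (hn : 0 < n) {lam : ℕ → ℝ} {Porth Sig : Matrix (Fin p) (Fin p) ℝ}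
    (hlam : ∀ k, 1 ≤ k → k ≤ p → 0 ≤ lam k)
    (hanti : ∀ j k, 1 ≤ j → j ≤ k → k ≤ p → lam k ≤ lam j) (hP : Porth * Porthᵀ = 1)
    (hSig : Sig = Porth * Matrix.diagonal (fun i : Fin p => lam ((i : ℕ) + 1)) * Porthᵀ)
    {Ω : Type*} [MeasurableSpace Ω] {P : Measure Ω} [IsProbabilityMeasure P]
    {X : Ω → Fin n → Fin p → ℝ} {ξ : Ω → Fin n → ℝ} {βstar : Fin p → ℝ} {βhat : Ω → Fin p → ℝ}
    (hind : IndepFun X ξ P)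
    (hlaw : Measure.map X P = Measure.pi fun _ : Fin n => mvGaussian p lam Porth)
    (hmin : ∀ᵐ ω ∂P, IsMinInterp (X ω)
      (fun i => (∑ j, X ω i j * βstar j) + ξ ω i) (βhat ω))
    {c0 : ℝ} (hc0 : 80 ≤ c0) (hne : (kstarSet p lam c0 n).Nonempty) :
    ENNReal.ofReal (1 - 3 * Real.exp (-n)) ≤
      P {ω | min (rbar p lam (1 / 400) (rho p lam c0 n βstar (enorm2 (ξ ω))) (enorm2 (ξ ω)))
          (1 / 80 * enorm2 (ξ ω) / √n) ≤ predNorm Sig (fun j => βhat ω j - βstar j)} := by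
  have hX : AEMeasurable X P := .of_map_ne_zero (hlaw ▸ IsProbabilityMeasure.ne_zero _)
  let e : ℤ ≃ ℕ := Equiv.intEquivNat
  let scale (y : Fin n → ℝ) : ℕ := e ⌊Real.logb 2 (enorm2 y)⌋
  have hscale : Measurable scale :=
    measurable_from_top.comp (((Real.measurable_log.comp measurable_enorm2).div_const _).floor)
  have hfailure (k : ℕ) :
      P.map X (failureEvent n lam Sig c0 βstar ((2 : ℝ) ^ e.symm k)) ≤
        3 * ENNReal.ofReal (Real.exp (-n)) := by
    rw [hlaw]
    exact measure_failureEvent_le hn (fun j => hlam _ (by omega) j.2) hanti hP hSig hc0 hne βstar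
      (by positivity)
  calc ENNReal.ofReal (1 - 3 * Real.exp (-n))
      = 1 - 3 * ENNReal.ofReal (Real.exp (-n)) := by
        rw [ENNReal.ofReal_sub _ (by positivity), ENNReal.ofReal_one,
          ENNReal.ofReal_mul (by norm_num), ENNReal.ofReal_ofNat]
    _ ≤ P {ω | X ω ∉ failureEvent n lam Sig c0 βstar ((2 : ℝ) ^ e.symm (scale (ξ ω)))} :=
        one_sub_le_measure_notMem hX (hind.comp measurable_id hscale) hfailure
    _ ≤ _ := by
        refine measure_mono_ae ?_
        filter_upwards [hmin] with ω hω hgood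
        refine min_le_predNorm_of_notMem_failureEvent hω ?_
        rwa [← e.symm_apply_apply ⌊Real.logb 2 (enorm2 (ξ ω))⌋]

end LowerBound

/-- Theorem 1, lower bound: there exist absolute constants
`γ, c₁, c₂, c₃ > 0` such that, in the model `Y = Xβ* + ξ` with `p ≥ n`, `k* ≤ c n`, and
rows of `X` which conditionally on `ξ` are i.i.d. `N(0,Σ)` (formalized as: `X` is
independent of `ξ` and `X` has law `N(0,Σ)^{⊗n}`), with probability at least
`1 - c₁ e^{-c₂ n}` the minimum `ℓ2`-norm interpolator `β̂` satisfies
`‖Σ^{1/2}(β̂ - β*)‖₂ ≥ min (r̄(γ)) (c₃ ‖ξ‖₂/√n)`. -/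
theorem stmt1 :
    ∃ c0 > (0 : ℝ), ∃ c > (0 : ℝ), ∃ γ > (0 : ℝ),
    ∃ c1 > (0 : ℝ), ∃ c2 > (0 : ℝ), ∃ c3 > (0 : ℝ),
    ∀ (n p : ℕ), 0 < n → n ≤ p →
    ∀ (lam : ℕ → ℝ) (Porth Sig : Matrix (Fin p) (Fin p) ℝ),
      (∀ k, 1 ≤ k → k ≤ p → 0 ≤ lam k) →
      (∀ j k, 1 ≤ j → j ≤ k → k ≤ p → lam k ≤ lam j) →
      Porth * Porthᵀ = 1 →
      Sig = Porth * Matrix.diagonal (fun i : Fin p => lam ((i : ℕ) + 1)) * Porthᵀ →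
      n ≤ Sig.rank →
    ∀ (Ω : Type) (_ : MeasurableSpace Ω) (P : Measure Ω), IsProbabilityMeasure P →
    ∀ (X : Ω → Fin n → Fin p → ℝ) (ξ : Ω → Fin n → ℝ) (βstar : Fin p → ℝ)
      (βhat : Ω → Fin p → ℝ),
      -- conditionally on `ξ`, the rows of `X` are i.i.d. `N(0,Σ)`:
      -- `X ⟂ ξ` and `X ~ N(0,Σ)^{⊗n}`
      IndepFun X ξ P →
      Measure.map X P = (Measure.pi fun _ : Fin n => mvGaussian p lam Porth) →
      (∀ᵐ ω ∂P, IsMinInterp (X ω)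
        (fun i => (∑ j, X ω i j * βstar j) + ξ ω i) (βhat ω)) →
      (kstarSet p lam c0 n).Nonempty → (kstar p lam c0 n : ℝ) ≤ c * n →
      ENNReal.ofReal (1 - c1 * Real.exp (-c2 * n)) ≤
        P {ω | min (rbar p lam γ (rho p lam c0 n βstar (enorm2 (ξ ω))) (enorm2 (ξ ω)))
                   (c3 * enorm2 (ξ ω) / Real.sqrt n) ≤
               predNorm Sig (fun j => βhat ω j - βstar j)} := by
  refine ⟨100, by norm_num, 1, one_pos, 1 / 400, by norm_num, 3, by norm_num, 1, one_pos,
    1 / 80, by norm_num, ?_⟩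
  intro n p hn _ lam Porth Sig hlam hanti hP hSig _ Ω _ P _ X ξ βstar βhat hind hlaw hmin hne _
  simpa only [neg_one_mul] using
    stmt1_general hn hlam hanti hP hSig hind hlaw hmin (by norm_num) hne
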